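/- arXiv:1510.07742 — 3 statements merged into one kernel-verified Lean document; each statement's English description precedes it below -/
import Mathlib

section
/- Let n = 5, let α_1, …, α_5 ∈ ℝ (indices mod 5) satisfy sin(α_{j+1} − α_j) ≠ 0 for all j, let P_θ be the associated 5×5 perpendicular-bisector evolute matrix, and let C, S ∈ ℝ⁵ be given by C_j = cos α_j, S_j = sin α_j. Then there exists λ ∈ ℝ such that for every p ∈ ℝ⁵, P_θ³·p − λ·(P_θ·p) ∈ span{C, S}. Geometrically: the third perpendicular-bisector evolute of any pentagon is homothetic to its first perpendicular-bisector evolute (Grünbaum's conjecture). -/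
open Real

/-- The perpendicular-bisector evolute matrix `P_θ` associated with the cyclic
sequence of normal angles `α`. -/
noncomputable def Pmat (n : ℕ) [NeZero n] (α : Fin n → ℝ) : Matrix (Fin n) (Fin n) ℝ :=
  Matrix.of fun j k =>
    if k = j then
      (Real.cos (α j - α (j - 1)) / Real.sin (α j - α (j - 1)) -
        Real.cos (α (j + 1) - α j) / Real.sin (α (j + 1) - α j)) / 2
    else if k = j + 1 then 1 / (2 * Real.sin (α (j + 1) - α j))
    else if k = j - 1 then -(1 / (2 * Real.sin (α j - α (j - 1))))
    else 0

/-! Translations of the polygon span a `P_θ`-invariant plane `W = span {C, S}`, on which `P_θ`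
acts as a quarter turn: there its trace is `0` and its determinant `1`. On `ℝ⁵` the trace of `P_θ`
telescopes to `0`, and `P_θ` is singular because for odd `n` some nonzero polygon with the given
normals is inscribed in a circle centred at the origin, so that all its perpendicular bisectors
pass through the origin. Hence the endomorphism induced on the three-dimensional quotient `ℝ⁵ ⧸ W`
has trace `0` and determinant `0`, and the Cayley–Hamilton theorem says that its cube is a
multiple of it. -/

section LinearAlgebra

variable {K V : Type*} [Field K] [AddCommGroup V] [Module K V]
  {W : Submodule K V} {f : Module.End K V}

theorem trace_eq_trace_restrict_add_trace_mapQ [FiniteDimensional K V] (hW : W ≤ W.comap f) :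
    LinearMap.trace K V f =
      LinearMap.trace K W (f.restrict hW) + LinearMap.trace K (V ⧸ W) (W.mapQ W f hW) := by
  let bW := Module.Free.chooseBasis K W
  let bQ := Module.Free.chooseBasis K (V ⧸ W)
  rw [LinearMap.trace_eq_matrix_trace K (Module.Basis.sumQuot bW bQ),
    LinearMap.trace_eq_matrix_trace K bW, LinearMap.trace_eq_matrix_trace K bQ]
  simp only [Matrix.trace, Matrix.diag, LinearMap.toMatrix_apply, Fintype.sum_sum_type]
  congr 1
  · refine Finset.sum_congr rfl fun i _ => ?_
    rw [Module.Basis.sumQuot_inl]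
    exact Module.Basis.sumQuot_repr_inl_of_mem ..
  · refine Finset.sum_congr rfl fun i _ => ?_
    rw [Module.Basis.sumQuot_repr_inr, ← Module.Basis.sumQuot_inr bW bQ i, W.mapQ_apply]
    simp

open Polynomial in
theorem exists_pow_three_eq_smul_of_trace_eq_zero_of_det_eq_zero
    (hV : Module.finrank K V = 3) (htr : LinearMap.trace K V f = 0) (hdet : LinearMap.det f = 0) :
    ∃ c : K, f ^ 3 = c • f := by
  have : FiniteDimensional K V := .of_finrank_pos (by omega)
  have coeff_zero : f.charpoly.coeff 0 = 0 := by
    simpa [hV, LinearMap.det_eq_sign_charpoly_coeff] using hdet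
  have coeff_two : f.charpoly.coeff 2 = 0 := by
    let b := Module.finBasisOfFinrankEq K V hV
    rw [LinearMap.trace_eq_matrix_trace K b, Matrix.trace_eq_neg_charpoly_coeff,
      LinearMap.charpoly_toMatrix] at htr
    simpa using htr
  have natDegree_eq : f.charpoly.natDegree = 3 := f.charpoly_natDegree.trans hV
  have coeff_three : f.charpoly.coeff 3 = 1 := natDegree_eq ▸ f.charpoly_monic.coeff_natDegree
  refine ⟨-f.charpoly.coeff 1, eq_of_sub_eq_zero ?_⟩
  have cayley_hamilton := f.aeval_self_charpoly
  rw [f.charpoly.as_sum_range_C_mul_X_pow, natDegree_eq] at cayley_hamilton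
  simpa [Finset.sum_range_succ, coeff_zero, coeff_two, coeff_three, Algebra.smul_def, add_comm]
    using cayley_hamilton

theorem exists_pow_three_sub_smul_mem_of_finrank_quotient_eq_three [FiniteDimensional K V]
    (hW : W ≤ W.comap f) (hVW : Module.finrank K (V ⧸ W) = 3)
    (htr : LinearMap.trace K V f = LinearMap.trace K W (f.restrict hW))
    (hdet : LinearMap.det f = 0) (hdetW : LinearMap.det (f.restrict hW) ≠ 0) :
    ∃ c : K, ∀ v, (f ^ 3) v - c • f v ∈ W := by
  have trace_mapQ : LinearMap.trace K (V ⧸ W) (W.mapQ W f hW) = 0 := by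
    simpa [htr] using trace_eq_trace_restrict_add_trace_mapQ hW
  have det_mapQ : LinearMap.det (W.mapQ W f hW) = 0 := by
    simpa [hdet, hdetW] using LinearMap.det_eq_det_mul_det W f hW
  obtain ⟨c, hc⟩ :=
    exists_pow_three_eq_smul_of_trace_eq_zero_of_det_eq_zero hVW trace_mapQ det_mapQ
  refine ⟨c, fun v => (Submodule.Quotient.mk_eq_zero W).1 ?_⟩
  simpa [pow_succ, sub_eq_zero] using LinearMap.congr_fun hc (Submodule.Quotient.mk v)

theorem exists_pow_three_sub_smul_mem_span_pair {x y : V} (hxy : LinearIndependent K ![x, y])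
    (hfx : f x = -y) (hfy : f y = x) (hV : Module.finrank K V = 5)
    (htr : LinearMap.trace K V f = 0) (hdet : LinearMap.det f = 0) :
    ∃ c : K, ∀ v, (f ^ 3) v - c • f v ∈ Submodule.span K {x, y} := by
  have : FiniteDimensional K V := .of_finrank_pos (by omega)
  rw [← Matrix.range_cons_cons_empty x y ![]]
  set W := Submodule.span K (Set.range ![x, y])
  have hx : x ∈ W := Submodule.subset_span ⟨0, rfl⟩
  have hy : y ∈ W := Submodule.subset_span ⟨1, rfl⟩
  have hW : W ≤ W.comap f := by
    refine Submodule.span_le.2 (Set.range_subset_iff.2 (Fin.forall_fin_two.2 ⟨?_, ?_⟩))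
    · simpa [hfx] using hy
    · simpa [hfy] using hx
  have hVW : Module.finrank K (V ⧸ W) = 3 := by
    rw [Submodule.finrank_quotient, hV, finrank_span_eq_card hxy, Fintype.card_fin]
  let b : Module.Basis (Fin 2) K W := Module.Basis.span hxy
  have hb (i : Fin 2) : (b i : V) = ![x, y] i :=
    congrArg Subtype.val (Module.Basis.span_apply hxy i)
  have hfb₀ : f.restrict hW (b 0) = -b 1 := Subtype.ext (by simp [hb, hfx])
  have hfb₁ : f.restrict hW (b 1) = b 0 := Subtype.ext (by simp [hb, hfy])
  have toMatrix_restrict : LinearMap.toMatrix b b (f.restrict hW) = !![0, 1; -1, 0] := by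
    ext i j
    fin_cases i <;> fin_cases j <;> simp [LinearMap.toMatrix_apply, hfb₀, hfb₁]
  refine exists_pow_three_sub_smul_mem_of_finrank_quotient_eq_three hW hVW ?_ hdet ?_
  · simp [htr, LinearMap.trace_eq_matrix_trace K b, toMatrix_restrict]
  · simp [← LinearMap.det_toMatrix b, toMatrix_restrict]

end LinearAlgebra

theorem linearIndependent_cos_sin {ι : Type*} {α : ι → ℝ} {i j : ι} (h : sin (α j - α i) ≠ 0) :
    LinearIndependent ℝ ![fun k => cos (α k), fun k => sin (α k)] := by
  rw [LinearIndependent.pair_iff]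
  intro s t hst
  have hi : s * cos (α i) + t * sin (α i) = 0 := congrFun hst i
  have hj : s * cos (α j) + t * sin (α j) = 0 := congrFun hst j
  constructor <;> refine (mul_eq_zero.1 ?_).resolve_right h <;> rw [sin_sub]
  · linear_combination sin (α j) * hi - sin (α i) * hj
  · linear_combination cos (α i) * hj - cos (α j) * hi

theorem exists_add_shift_eq_of_odd_nsmul_eq_zero {G K : Type*} [AddMonoid G] [DivisionRing K]
    [NeZero (2 : K)] {g : G} {n : ℕ} (hn : Odd n) (hng : n • g = 0) (θ : G → K) :
    ∃ β : G → K, ∀ x, β x + β (x + g) = θ x := by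
  let s (x : G) (k : ℕ) : K := (-1) ^ k * θ (x + k • g)
  refine ⟨fun x => 2⁻¹ * ∑ k ∈ Finset.range n, s x k, fun x => ?_⟩
  have shift (k : ℕ) : s (x + g) k = -s x (k + 1) := by
    simp [s, pow_succ, succ_nsmul', add_assoc]
  have telescope : ∑ k ∈ Finset.range n, (s x k + s (x + g) k) = s x 0 - s x n := by
    simp only [shift, ← sub_eq_add_neg, Finset.sum_range_sub']
  have ends : s x 0 - s x n = 2 * θ x := by
    simp [s, hng, hn.neg_one_pow, two_mul]
  rw [← mul_add, ← Finset.sum_add_distrib, telescope, ends, inv_mul_cancel_left₀ two_ne_zero]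

section PerpendicularBisectorEvolute

variable {n : ℕ} [NeZero n] {α : Fin n → ℝ}

theorem trace_Pmat (α : Fin n → ℝ) : (Pmat n α).trace = 0 := by
  let c (j : Fin n) : ℝ := cos (α (j + 1) - α j) / sin (α (j + 1) - α j)
  have diag_eq (j : Fin n) : Pmat n α j j = (c (j - 1) - c j) / 2 := by simp [Pmat, c]
  have sum_shift : ∑ j, c (j - 1) = ∑ j, c j := Equiv.sum_comp (Equiv.subRight 1) c
  simp [Matrix.trace, diag_eq, ← Finset.sum_div, sum_shift]

theorem Pmat_mulVec_apply (hn : 3 ≤ n) (α p : Fin n → ℝ) (j : Fin n) :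
    (Pmat n α).mulVec p j =
      ((p (j + 1) - cos (α (j + 1) - α j) * p j) / sin (α (j + 1) - α j) +
        (cos (α j - α (j - 1)) * p j - p (j - 1)) / sin (α j - α (j - 1))) / 2 := by
  have fin_one_ne_zero : (1 : Fin n) ≠ 0 := by
    simp [Fin.ext_iff, Nat.mod_eq_of_lt (show 1 < n by omega)]
  have next_ne : j + 1 ≠ j := by simpa using fin_one_ne_zero
  have prev_ne : j - 1 ≠ j := by simpa using fin_one_ne_zero
  have prev_ne_next : j - 1 ≠ j + 1 := by
    rw [Ne, sub_eq_iff_eq_add, add_assoc, left_eq_add]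
    simp [Fin.ext_iff, Fin.val_add, Nat.mod_eq_of_lt (show 1 < n by omega),
      Nat.mod_eq_of_lt (show 2 < n by omega)]
  have support : ∑ k, Pmat n α j k * p k = ∑ k ∈ {j, j + 1, j - 1}, Pmat n α j k * p k := by
    refine (Finset.sum_subset (Finset.subset_univ _) fun k _ hk => ?_).symm
    simp only [Finset.mem_insert, Finset.mem_singleton, not_or] at hk
    simp [Pmat, hk]
  rw [Matrix.mulVec, dotProduct, support, Finset.sum_insert (by simp [next_ne.symm, prev_ne.symm]),
    Finset.sum_pair prev_ne_next.symm]
  simp only [Pmat, Matrix.of_apply, if_true, if_neg next_ne, if_neg prev_ne, if_neg prev_ne_next]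
  ring

/-- The support number of an evolute side is the average of the positions `x j`, `y j` of the
two endpoints of side `j`, measured from the foot of the perpendicular dropped from the origin. -/
theorem Pmat_mulVec_eq_midpoint (hn : 3 ≤ n) (hsin : ∀ j, sin (α (j + 1) - α j) ≠ 0)
    {p x y : Fin n → ℝ}
    (hx : ∀ j, p (j + 1) = cos (α (j + 1) - α j) * p j + sin (α (j + 1) - α j) * x j)
    (hy : ∀ j, p (j - 1) = cos (α j - α (j - 1)) * p j - sin (α j - α (j - 1)) * y j) :
    (Pmat n α).mulVec p = fun j => midpoint ℝ (x j) (y j) := by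
  funext j
  have sin_next := hsin j
  have sin_prev : sin (α j - α (j - 1)) ≠ 0 := by simpa using hsin (j - 1)
  rw [Pmat_mulVec_apply hn, hx, hy, midpoint_eq_smul_add]
  simp only [smul_eq_mul, invOf_eq_inv]
  field_simp
  ring

/-- The sides with support numbers `cos (α j - φ)` all pass through the point `(cos φ, sin φ)`, so
the two endpoints of each side coincide. -/
theorem Pmat_mulVec_cos_sub (hn : 3 ≤ n) (hsin : ∀ j, sin (α (j + 1) - α j) ≠ 0) (φ : ℝ) :
    (Pmat n α).mulVec (fun j => cos (α j - φ)) = fun j => -sin (α j - φ) := by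
  rw [Pmat_mulVec_eq_midpoint hn hsin (x := fun j => -sin (α j - φ)) (y := fun j => -sin (α j - φ))]
  · simp only [midpoint_self]
  · intro j
    rw [show α (j + 1) - φ = α (j + 1) - α j + (α j - φ) by ring, cos_add]
    ring
  · intro j
    rw [show α (j - 1) - φ = (α j - φ) - (α j - α (j - 1)) by ring, cos_sub]
    ring

theorem Pmat_mulVec_cos (hn : 3 ≤ n) (hsin : ∀ j, sin (α (j + 1) - α j) ≠ 0) :
    (Pmat n α).mulVec (fun j => cos (α j)) = -fun j => sin (α j) := by
  simpa [Pi.neg_def] using Pmat_mulVec_cos_sub hn hsin 0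

theorem Pmat_mulVec_sin (hn : 3 ≤ n) (hsin : ∀ j, sin (α (j + 1) - α j) ≠ 0) :
    (Pmat n α).mulVec (fun j => sin (α j)) = fun j => cos (α j) := by
  simpa [cos_sub_pi_div_two, sin_sub_pi_div_two] using Pmat_mulVec_cos_sub hn hsin (π / 2)

/-- The kernel vector consists of the support numbers of a polygon inscribed in the unit circle:
all its perpendicular bisectors pass through the origin. Its side `j` has half central angle
`β j`, so its endpoints are at angles `α j ± β j`. -/
theorem det_Pmat_eq_zero_of_odd (hn : 3 ≤ n) (hodd : Odd n)
    (hsin : ∀ j, sin (α (j + 1) - α j) ≠ 0) : (Pmat n α).det = 0 := by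
  obtain ⟨β, hβ⟩ := exists_add_shift_eq_of_odd_nsmul_eq_zero (g := 1) hodd
    (by simpa using card_nsmul_eq_zero (x := (1 : Fin n))) fun j => α (j + 1) - α j
  have next_eq (j : Fin n) : β (j + 1) = α (j + 1) - α j - β j := by linarith [hβ j]
  have prev_eq (j : Fin n) : β (j - 1) = α j - α (j - 1) - β j := by
    have := hβ (j - 1)
    rw [sub_add_cancel] at this
    linarith
  refine Matrix.exists_mulVec_eq_zero_iff.1 ⟨fun j => cos (β j), fun hcos => ?_, ?_⟩
  · have cos_zero : cos (β 0) = 0 := congrFun hcos 0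
    have cos_next : cos (β (0 + 1)) = 0 := congrFun hcos (0 + 1)
    rw [next_eq, cos_sub, cos_zero, mul_zero, zero_add] at cos_next
    have sin_zero : sin (β 0) = 0 := (mul_eq_zero.1 cos_next).resolve_left (hsin 0)
    simpa [cos_zero, sin_zero] using sin_sq_add_cos_sq (β 0)
  · rw [Pmat_mulVec_eq_midpoint hn hsin (x := fun j => sin (β j)) (y := fun j => -sin (β j))]
    · simp only [midpoint_self_neg]
      rfl
    · intro j
      rw [next_eq, cos_sub]
    · intro j
      rw [prev_eq, cos_sub]
      ring

end PerpendicularBisectorEvolute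

/-- **Grünbaum's conjecture.** The third perpendicular-bisector
evolute of any pentagon is homothetic to its first one: there is `λ ∈ ℝ` such that
`P_θ³ p − λ·(P_θ p) ∈ span{C, S}` for all support vectors `p`. -/
theorem stmt_12 (α : Fin 5 → ℝ)
    (hsin : ∀ j : Fin 5, Real.sin (α (j + 1) - α j) ≠ 0)
    (C S : Fin 5 → ℝ)
    (hC : ∀ j : Fin 5, C j = Real.cos (α j))
    (hS : ∀ j : Fin 5, S j = Real.sin (α j)) :
    ∃ lam : ℝ, ∀ p : Fin 5 → ℝ,
      (Pmat 5 α).mulVec ((Pmat 5 α).mulVec ((Pmat 5 α).mulVec p)) -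
          lam • (Pmat 5 α).mulVec p ∈
        Submodule.span ℝ ({C, S} : Set (Fin 5 → ℝ)) := by
  obtain rfl : C = fun j => cos (α j) := funext hC
  obtain rfl : S = fun j => sin (α j) := funext hS
  have hn : 3 ≤ 5 := by norm_num
  have htr : LinearMap.trace ℝ _ (Pmat 5 α).toLin' = 0 := by
    rw [Matrix.trace_toLin'_eq, trace_Pmat]
  have hdet : LinearMap.det (Pmat 5 α).toLin' = 0 := by
    rw [LinearMap.det_toLin', det_Pmat_eq_zero_of_odd hn (by decide) hsin]
  simpa [pow_succ] using
    exists_pow_three_sub_smul_mem_span_pair (linearIndependent_cos_sin (hsin 0))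
      (Pmat_mulVec_cos hn hsin) (Pmat_mulVec_sin hn hsin) (by simp) htr hdet
end

section
/- Let n ≥ 3 and let α_1, …, α_n ∈ ℝ (indices mod n) satisfy sin(α_{j+1} − α_j) ≠ 0 for all j, and let P_θ be the associated n×n perpendicular-bisector evolute matrix. Then the characteristic polynomial χ of P_θ satisfies χ(−X) = (−1)ⁿ·χ(X); i.e. the spectrum of the P-evolute map p ↦ P_θ·p is symmetric with respect to the origin, opposite eigenvalues having the same algebraic multiplicities. -/
open Real Polynomial

/-!
Let `S` be the cyclic shift, and let `A` and `B` be the diagonal matrices with entries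
`cot θ_{j+1/2}` and `1 / sin θ_{j+1/2}`. Since `B² - A² = 1`, the block matrix `J = (-A B; -B A)`
is a complex structure: `J² = -1`. The evolute matrix is the compression of `J` to the graph of `S`,
and its transpose is the compression to the orthogonal complement, the graph of `-S`.

If `J² = -1`, then `(X - J)(X + J) = X² + 1`, so Jacobi's identity for complementary minors compares
the characteristic polynomial of one compression with that of minus the complementary one. Over `ℝ`
the characteristic polynomial of `J` is a power of the irreducible `X² + 1`, so for half-dimensional
compressions the two are equal. Hence `P` and `-Pᵀ` have the same characteristic polynomial.
-/

section ComplexStructure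

open Matrix

variable {m n R K : Type*} [Fintype m] [DecidableEq m] [Fintype n] [DecidableEq n]
  [CommRing R] [Field K]

lemma charpoly_comp_neg_X (M : Matrix n n R) :
    M.charpoly.comp (-X) = (-1) ^ Fintype.card n * (-M).charpoly := by
  have hmap : (compRingHom (-X)).mapMatrix M.charmatrix = -(-M).charmatrix := by
    ext1 i j
    rcases eq_or_ne i j with rfl | hij
    · simp [sub_eq_add_neg, add_comm]
    · simp [hij]
  rw [charpoly, ← coe_compRingHom_apply, RingHom.map_det, hmap, det_neg, charpoly]

lemma charmatrix_mul_charmatrix_neg {J : Matrix n n R} (hJ : J * J = -1) :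
    J.charmatrix * (-J).charmatrix = (X ^ 2 + 1 : R[X]) • 1 := by
  have hcomm : Commute (scalar n (X : R[X])) (C.mapMatrix J) :=
    scalar_commute _ (Commute.all _) _
  calc J.charmatrix * (-J).charmatrix
      = scalar n X * scalar n X - C.mapMatrix (J * J) := by
        rw [charmatrix, charmatrix, map_neg, sub_neg_eq_add, map_mul,
          ← hcomm.mul_self_sub_mul_self_eq']
    _ = scalar n (X ^ 2 + 1) := by
        rw [hJ, map_neg, map_one, sub_neg_eq_add, map_add, map_one, map_pow, sq]
    _ = (X ^ 2 + 1 : R[X]) • 1 := by rw [scalar_apply, smul_one_eq_diagonal]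

/-- Jacobi's identity for complementary minors. -/
lemma det_mul_det_toBlocks₂₂_of_mul_eq_smul_one {M N : Matrix (m ⊕ n) (m ⊕ n) R} {r : R}
    (hMN : M * N = r • 1) :
    M.det * N.toBlocks₂₂.det = M.toBlocks₁₁.det * r ^ Fintype.card n := by
  have hblocks : M * fromBlocks 1 N.toBlocks₁₂ 0 N.toBlocks₂₂ =
      fromBlocks M.toBlocks₁₁ 0 M.toBlocks₂₁ (r • 1) := by
    rw [← fromBlocks_toBlocks M, ← fromBlocks_toBlocks N, fromBlocks_multiply, ← fromBlocks_one,
      fromBlocks_smul, fromBlocks_inj] at hMN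
    conv_lhs => rw [← fromBlocks_toBlocks M]
    simp [fromBlocks_multiply, hMN.2.1, hMN.2.2.2]
  simpa using congrArg det hblocks

lemma charpoly_mul_charpoly_neg_toBlocks₂₂ {J : Matrix (m ⊕ n) (m ⊕ n) R} (hJ : J * J = -1) :
    J.charpoly * (-J.toBlocks₂₂).charpoly =
      J.toBlocks₁₁.charpoly * (X ^ 2 + 1) ^ Fintype.card n := by
  have toBlocks₁₁_charmatrix : J.charmatrix.toBlocks₁₁ = J.toBlocks₁₁.charmatrix := by
    conv_lhs => rw [← fromBlocks_toBlocks J, charmatrix_fromBlocks, toBlocks_fromBlocks₁₁]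
  have toBlocks₂₂_charmatrix : (-J).charmatrix.toBlocks₂₂ = (-J.toBlocks₂₂).charmatrix := by
    conv_lhs => rw [← fromBlocks_toBlocks J, fromBlocks_neg, charmatrix_fromBlocks,
      toBlocks_fromBlocks₂₂]
  have hjacobi := det_mul_det_toBlocks₂₂_of_mul_eq_smul_one (charmatrix_mul_charmatrix_neg hJ)
  rwa [toBlocks₁₁_charmatrix, toBlocks₂₂_charmatrix] at hjacobi

lemma irreducible_X_sq_add_one (hK : ¬IsSquare (-1 : K)) : Irreducible (X ^ 2 + 1 : K[X]) := by
  have hirr : Irreducible (X ^ 2 - C (-1) : K[X]) :=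
    X_pow_sub_C_irreducible_of_prime Nat.prime_two fun b hb => hK ⟨b, by rw [← hb, sq]⟩
  simpa using hirr

lemma charpoly_eq_of_mul_self_eq_neg_one (hK : ¬IsSquare (-1 : K)) {J : Matrix n n K}
    (hJ : J * J = -1) : J.charpoly = (X ^ 2 + 1) ^ (Fintype.card n / 2) := by
  have hdvd : J.charpoly ∣ (X ^ 2 + 1) ^ Fintype.card n :=
    ⟨(-J).charpoly, by
      simpa [charpoly] using (congrArg det (charmatrix_mul_charmatrix_neg hJ)).symm⟩
  obtain ⟨k, -, hk⟩ := (dvd_prime_pow (irreducible_X_sq_add_one hK).prime _).mp hdvd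
  have hmonic : (X ^ 2 + 1 : K[X]).Monic := by monicity!
  have hcharpoly : J.charpoly = (X ^ 2 + 1) ^ k :=
    eq_of_monic_of_associated J.charpoly_monic (hmonic.pow k) hk
  have hdegree : (X ^ 2 + 1 : K[X]).natDegree = 2 := by compute_degree!
  have hcard : Fintype.card n = k * 2 := by
    rw [← J.charpoly_natDegree_eq_dim, hcharpoly, hmonic.natDegree_pow, hdegree]
  rw [hcharpoly, hcard, Nat.mul_div_cancel _ two_pos]

theorem charpoly_toBlocks₁₁_eq_charpoly_neg_toBlocks₂₂ (hK : ¬IsSquare (-1 : K))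
    (hmn : Fintype.card m = Fintype.card n) {J : Matrix (m ⊕ n) (m ⊕ n) K} (hJ : J * J = -1) :
    J.toBlocks₁₁.charpoly = (-J.toBlocks₂₂).charpoly := by
  have hjacobi := charpoly_mul_charpoly_neg_toBlocks₂₂ hJ
  have hhalf : Fintype.card (m ⊕ n) / 2 = Fintype.card n := by
    rw [Fintype.card_sum]
    lia
  rw [charpoly_eq_of_mul_self_eq_neg_one hK hJ, hhalf, mul_comm] at hjacobi
  exact (mul_right_cancel₀ (pow_ne_zero _ (irreducible_X_sq_add_one hK).ne_zero) hjacobi).symm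

end ComplexStructure

section GraphFrame

open Matrix

variable {n R : Type*} [Fintype n] [DecidableEq n] [CommRing R] {A B S : Matrix n n R}

/-- The matrix whose two block columns span the graphs of `S` and of `-S`; it is left
unnormalized so that no square root of `2` is needed. -/
def graphFrame (S : Matrix n n R) : Matrix (n ⊕ n) (n ⊕ n) R :=
  fromBlocks 1 1 S (-S)

lemma graphFrame_transpose_mul_self (hS : Sᵀ * S = 1) :
    (graphFrame S)ᵀ * graphFrame S = (2 : R) • 1 := by
  rw [← fromBlocks_one, fromBlocks_smul]
  simp [graphFrame, fromBlocks_transpose, fromBlocks_multiply, hS, two_smul]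

lemma graphFrame_mul_transpose_self (hS : Sᵀ * S = 1) :
    graphFrame S * (graphFrame S)ᵀ = (2 : R) • 1 := by
  rw [← fromBlocks_one, fromBlocks_smul]
  simp [graphFrame, fromBlocks_transpose, fromBlocks_multiply, mul_eq_one_comm.mp hS, two_smul]

lemma fromBlocks_mul_self_eq_neg_one (hAB : A * B = B * A) (hsub : B * B - A * A = 1) :
    fromBlocks (-A) B (-B) A * fromBlocks (-A) B (-B) A = -1 := by
  rw [← fromBlocks_one, fromBlocks_neg, fromBlocks_multiply, ← hsub]
  congr 1 <;> noncomm_ring [hAB]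

end GraphFrame

section GraphCompression

open Matrix

variable {n K : Type*} [Fintype n] [Field K] {A B S : Matrix n n K}

/-- The compression `½ (1 Sᵀ) J (1; S)` of the block matrix `J = (-A B; -B A)` to the graph of `S`,
multiplied out. -/
def graphCompression (A B S : Matrix n n K) : Matrix n n K :=
  (2⁻¹ : K) • (-A + B * S - Sᵀ * B + Sᵀ * A * S)

lemma transpose_graphCompression (hA : Aᵀ = A) (hB : Bᵀ = B) :
    (graphCompression A B S)ᵀ = graphCompression A B (-S) := by
  simp only [graphCompression, transpose_smul, transpose_add, transpose_sub, transpose_neg,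
    transpose_mul, transpose_transpose, hA, hB]
  noncomm_ring

variable [DecidableEq n]

/-- For orthogonal `S`, the block matrix `(-A B; -B A)` written in the basis `graphFrame S`. -/
def graphConjugate (A B S : Matrix n n K) : Matrix (n ⊕ n) (n ⊕ n) K :=
  (2⁻¹ : K) • ((graphFrame S)ᵀ * fromBlocks (-A) B (-B) A * graphFrame S)

lemma toBlocks₁₁_graphConjugate : (graphConjugate A B S).toBlocks₁₁ = graphCompression A B S := by
  rw [graphConjugate, graphFrame, fromBlocks_transpose, fromBlocks_multiply, fromBlocks_multiply,
    fromBlocks_smul, toBlocks_fromBlocks₁₁, graphCompression, transpose_one]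
  noncomm_ring

lemma toBlocks₂₂_graphConjugate :
    (graphConjugate A B S).toBlocks₂₂ = graphCompression A B (-S) := by
  rw [graphConjugate, graphFrame, fromBlocks_transpose, fromBlocks_multiply, fromBlocks_multiply,
    fromBlocks_smul, toBlocks_fromBlocks₂₂, graphCompression, transpose_one]
  noncomm_ring

lemma graphConjugate_mul_self (h2 : (2 : K) ≠ 0) (hAB : A * B = B * A) (hsub : B * B - A * A = 1)
    (hS : Sᵀ * S = 1) : graphConjugate A B S * graphConjugate A B S = -1 := by
  set J := fromBlocks (-A) B (-B) A with hJ
  set F := graphFrame S with hF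
  calc graphConjugate A B S * graphConjugate A B S
      = (2⁻¹ * 2⁻¹ : K) • (Fᵀ * J * (F * Fᵀ) * J * F) := by
        simp only [graphConjugate, ← hJ, ← hF, smul_mul_smul_comm, Matrix.mul_assoc]
    _ = (2⁻¹ * 2⁻¹ * 2 : K) • (Fᵀ * (J * J) * F) := by
        rw [graphFrame_mul_transpose_self hS]
        simp only [Matrix.mul_smul, Matrix.smul_mul, Matrix.mul_one, smul_smul, Matrix.mul_assoc]
    _ = -((2⁻¹ * 2⁻¹ * 2 * 2 : K) • 1) := by
        rw [fromBlocks_mul_self_eq_neg_one hAB hsub, Matrix.mul_neg, Matrix.mul_one,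
          Matrix.neg_mul, graphFrame_transpose_mul_self hS, smul_neg, smul_smul]
    _ = -1 := by simp [h2]

lemma two_ne_zero_of_not_isSquare_neg_one (hK : ¬IsSquare (-1 : K)) : (2 : K) ≠ 0 := fun h2 =>
  hK ⟨1, by linear_combination -h2⟩

theorem charpoly_neg_graphCompression (hK : ¬IsSquare (-1 : K)) (hA : Aᵀ = A) (hB : Bᵀ = B)
    (hAB : A * B = B * A) (hsub : B * B - A * A = 1) (hS : Sᵀ * S = 1) :
    (-graphCompression A B S).charpoly = (graphCompression A B S).charpoly := by
  have hcomplex : graphConjugate A B S * graphConjugate A B S = -1 :=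
    graphConjugate_mul_self (two_ne_zero_of_not_isSquare_neg_one hK) hAB hsub hS
  have hblocks := charpoly_toBlocks₁₁_eq_charpoly_neg_toBlocks₂₂ hK rfl hcomplex
  rw [toBlocks₁₁_graphConjugate, toBlocks₂₂_graphConjugate, ← transpose_graphCompression hA hB,
    ← transpose_neg, charpoly_transpose] at hblocks
  exact hblocks.symm

end GraphCompression

section Evolute

open Matrix

lemma permMatrix_transpose_mul_self {ι R : Type*} [Fintype ι] [DecidableEq ι] [NonAssocSemiring R]
    (σ : Equiv.Perm ι) : (σ.permMatrix R)ᵀ * σ.permMatrix R = 1 := by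
  rw [transpose_permMatrix, ← permMatrix_mul, mul_inv_cancel, permMatrix_one]

lemma fin_one_add_one_ne_zero {n : ℕ} [NeZero n] (hn : 3 ≤ n) : (1 + 1 : Fin n) ≠ 0 := by
  obtain ⟨k, rfl⟩ := Nat.exists_eq_add_of_le' hn
  exact Fin.ne_of_val_ne (by simp [Fin.val_add, Nat.mod_eq_of_lt])

variable {n : ℕ} [NeZero n]

lemma graphCompression_diagonal_finRotate_apply {K : Type*} [Field K] (a b : Fin n → K)
    (j k : Fin n) :
    graphCompression (diagonal a) (diagonal b) ((finRotate n).permMatrix K) j k =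
      2⁻¹ * ((if k = j then a (j - 1) - a j else 0) + (if k = j + 1 then b j else 0) -
        (if k = j - 1 then b (j - 1) else 0)) := by
  simp only [graphCompression, transpose_permMatrix, Equiv.Perm.inv_def,
    PEquiv.toMatrix_toPEquiv_mul, PEquiv.mul_toMatrix_toPEquiv, Matrix.smul_apply,
    Matrix.add_apply, Matrix.sub_apply, Matrix.neg_apply, submatrix_apply, diagonal_apply,
    finRotate_symm_apply, id, smul_eq_mul, eq_sub_iff_add_eq, sub_add_cancel, eq_comm (b := k)]
  split_ifs <;> ring

/-- The angle `θ_{j+1/2}` between the consecutive normals `j` and `j + 1`. -/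
def turningAngle (α : Fin n → ℝ) (j : Fin n) : ℝ :=
  α (j + 1) - α j

lemma Pmat_eq_graphCompression (hn : 3 ≤ n) (α : Fin n → ℝ) :
    Pmat n α = graphCompression (diagonal fun j => Real.cot (turningAngle α j))
      (diagonal fun j => (Real.sin (turningAngle α j))⁻¹) ((finRotate n).permMatrix ℝ) := by
  have htwo : (1 + 1 : Fin n) ≠ 0 := fin_one_add_one_ne_zero hn
  have hone : (1 : Fin n) ≠ 0 := fun h => htwo (by simp [h])
  have hsucc (j : Fin n) : j + 1 ≠ j := by simpa using hone
  have hpred (j : Fin n) : j - 1 ≠ j := by simpa using hone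
  have hpred_succ (j : Fin n) : j - 1 ≠ j + 1 := by
    rw [Ne, sub_eq_iff_eq_add, add_assoc, left_eq_add]
    exact htwo
  ext j k
  rw [graphCompression_diagonal_finRotate_apply]
  simp only [Pmat, of_apply, turningAngle, Real.cot_eq_cos_div_sin, sub_add_cancel]
  rcases eq_or_ne k j with rfl | hkj
  · simp only [if_true, (hsucc k).symm, (hpred k).symm, if_false]
    ring
  rcases eq_or_ne k (j + 1) with rfl | hks
  · simp only [if_true, hsucc j, (hpred_succ j).symm, if_false]
    ring
  · simp only [hkj, hks, if_false]
    split_ifs <;> ring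

lemma csc_sq_sub_cot_sq {x : ℝ} (hx : Real.sin x ≠ 0) :
    (Real.sin x)⁻¹ * (Real.sin x)⁻¹ - Real.cot x * Real.cot x = 1 := by
  rw [Real.cot_eq_cos_div_sin]
  field_simp
  linarith [Real.sin_sq_add_cos_sq x]

theorem charpoly_neg_Pmat (hn : 3 ≤ n) {α : Fin n → ℝ}
    (hsin : ∀ j : Fin n, Real.sin (turningAngle α j) ≠ 0) :
    (-Pmat n α).charpoly = (Pmat n α).charpoly := by
  have hsub : (diagonal fun j => (Real.sin (turningAngle α j))⁻¹) *
      (diagonal fun j => (Real.sin (turningAngle α j))⁻¹) -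
      (diagonal fun j => Real.cot (turningAngle α j)) *
      (diagonal fun j => Real.cot (turningAngle α j)) = 1 := by
    simp only [diagonal_mul_diagonal, diagonal_sub, csc_sq_sub_cot_sq (hsin _), diagonal_one]
  rw [Pmat_eq_graphCompression hn]
  exact charpoly_neg_graphCompression (not_isSquare_of_neg neg_one_lt_zero)
    (diagonal_transpose _) (diagonal_transpose _) (commute_diagonal _ _) hsub
    (permMatrix_transpose_mul_self _)

end Evolute

/-- The spectrum of the perpendicular-bisector evolute matrix is
symmetric with respect to the origin, with opposite eigenvalues having the same
algebraic multiplicities: `χ(−X) = (−1)ⁿ χ(X)`. -/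
theorem stmt_16 (n : ℕ) (hn : 3 ≤ n) [NeZero n] (α : Fin n → ℝ)
    (hsin : ∀ j : Fin n, Real.sin (α (j + 1) - α j) ≠ 0) :
    (Matrix.charpoly (Pmat n α)).comp (-Polynomial.X) =
      (-1) ^ n * Matrix.charpoly (Pmat n α) := by
  rw [charpoly_comp_neg_X, charpoly_neg_Pmat hn hsin, Fintype.card_fin]
end

section
/- Let α, θ, p, q ∈ ℝ with sin θ ≠ 0, and let X ∈ ℝ² be the unique common point of the lines ℓ(α, p) and ℓ(α + θ, q). Then ⟨X, (cos(α + θ/2 + π/2), sin(α + θ/2 + π/2))⟩ = (q − p)/(2·sin(θ/2)). Consequently, the interior angle bisector of the two cooriented lines — the line through X with normal angle α + θ/2 + π/2 — is the cooriented line ℓ(α + θ/2 + π/2, (q − p)/(2·sin(θ/2))); hence the oriented angle bisector evolute of a cooriented polygon with sides ℓ(α_j, p_j) has sides ℓ(α_j + θ_{j+1/2}/2 + π/2, (p_{j+1} − p_j)/(2·sin(θ_{j+1/2}/2))) where θ_{j+1/2} = α_{j+1} − α_j. -/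
open Real

/-- The number `⟨X, (cos α, sin α)⟩`, i.e. the unique `p` such that the cooriented line `ℓ(α, p)`
passes through `X`. -/
noncomputable def normalCoord (X : ℝ × ℝ) (α : ℝ) : ℝ :=
  X.1 * cos α + X.2 * sin α

lemma normalCoord_add_sub_normalCoord_sub (X : ℝ × ℝ) (φ δ : ℝ) :
    normalCoord X (φ + δ) - normalCoord X (φ - δ) = 2 * sin δ * normalCoord X (φ + π / 2) := by
  simp only [normalCoord, cos_add_pi_div_two, sin_add_pi_div_two]
  rw [cos_add, sin_add, cos_sub, sin_sub]
  ring

lemma normalCoord_bisector (X : ℝ × ℝ) (α : ℝ) {θ : ℝ} (hθ : sin (θ / 2) ≠ 0) :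
    normalCoord X (α + θ / 2 + π / 2) =
      (normalCoord X (α + θ) - normalCoord X α) / (2 * sin (θ / 2)) := by
  have h_diff : normalCoord X (α + θ) - normalCoord X α =
      2 * sin (θ / 2) * normalCoord X (α + θ / 2 + π / 2) := by
    simpa only [add_assoc, add_halves, add_sub_cancel_right] using
      normalCoord_add_sub_normalCoord_sub X (α + θ / 2) (θ / 2)
  rw [h_diff, mul_div_cancel_left₀ _ (mul_ne_zero two_ne_zero hθ)]

lemma sin_half_ne_zero_of_sin_ne_zero {θ : ℝ} (hθ : sin θ ≠ 0) : sin (θ / 2) ≠ 0 := by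
  contrapose! hθ
  rw [← mul_div_cancel₀ θ two_ne_zero, sin_two_mul, hθ, mul_zero, zero_mul]

/-- If `X` is the common point of the cooriented lines `ℓ(α, p)`
and `ℓ(α + θ, q)` (with `sin θ ≠ 0`), then
`⟨X, (cos(α + θ/2 + π/2), sin(α + θ/2 + π/2))⟩ = (q − p)/(2 sin(θ/2))`:
the interior angle bisector of the two lines is `ℓ(α + θ/2 + π/2, (q−p)/(2 sin(θ/2)))`,
which gives the sides of the oriented angle bisector evolute. -/
theorem stmt_17 (α θ p q : ℝ) (hθ : Real.sin θ ≠ 0) (X : ℝ × ℝ)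
    (h1 : X.1 * Real.cos α + X.2 * Real.sin α = p)
    (h2 : X.1 * Real.cos (α + θ) + X.2 * Real.sin (α + θ) = q) :
    X.1 * Real.cos (α + θ / 2 + Real.pi / 2) + X.2 * Real.sin (α + θ / 2 + Real.pi / 2) =
      (q - p) / (2 * Real.sin (θ / 2)) := by
  subst h1 h2
  exact normalCoord_bisector X α (sin_half_ne_zero_of_sin_ne_zero hθ)
end
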